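/- Let s > 0, m > 0, β > 0, Δt > 0 and 0 < α ≤ 1, and assume m > β(2−α)Δt²/(4α) + (2(1−α)/α + 1)·s. Then there exists a sequence η : ℕ → ℝ satisfying, for all n, the recurrence (s + βΔt²)·η_{n+3} + (α m − (1−α)βΔt² − (3−α)s)·η_{n+2} + ((3−2α)s − 2α m)·η_{n+1} + (α m − (1−α)s)·η_n = 0, such that η is unbounded, i.e. for every M > 0 there is n with |η_n| > M. (Instability of the LC-DN-α scheme in the large added-mass regime, as asserted in Proposition 2.) -/

import Mathlib

/-- A real cubic with positive leading coefficient that is positive at `-1` has a root below `-1`. -/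
lemma cubic_root_lt_neg_one (a b c d : ℝ) (ha : 0 < a) (h : 0 < -a + b - c + d) :
    ∃ y : ℝ, y < -1 ∧ a * y ^ 3 + b * y ^ 2 + c * y + d = 0 := by
  obtain ⟨R, hR⟩ : ∃ R : ℝ, R = 1 + (|b| + |c| + |d|) / a := ⟨_, rfl⟩
  have hb := abs_nonneg b
  have hc := abs_nonneg c
  have hd := abs_nonneg d
  have hR1 : 1 ≤ R := by
    rw [hR]
    have : 0 ≤ (|b| + |c| + |d|) / a := by positivity
    linarith
  have haR : a * R = a + |b| + |c| + |d| := by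
    rw [hR]
    field_simp
    ring
  have hRR : R ≤ R ^ 2 := by nlinarith
  have hR0 : 0 < R ^ 2 := by positivity
  have hneg : a * (-R) ^ 3 + b * (-R) ^ 2 + c * (-R) + d < 0 := by
    have e : a * (-R) ^ 3 = -((a + |b| + |c| + |d|) * R ^ 2) := by
      rw [← haR]
      ring
    have h1 : b * R ^ 2 ≤ |b| * R ^ 2 := mul_le_mul_of_nonneg_right (le_abs_self b) hR0.le
    have h2 : -c * R ≤ |c| * R := mul_le_mul_of_nonneg_right (neg_le_abs c) (by linarith)
    have h3 : |c| * R ≤ |c| * R ^ 2 := mul_le_mul_of_nonneg_left hRR hc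
    have h4 : |d| * 1 ≤ |d| * R ^ 2 := mul_le_mul_of_nonneg_left (by linarith) hd
    have h5 := le_abs_self d
    have h6 : 0 < a * R ^ 2 := by positivity
    rw [e]
    nlinarith
  have hcont : ContinuousOn (fun y : ℝ => a * y ^ 3 + b * y ^ 2 + c * y + d)
      (Set.Icc (-R) (-1)) := by fun_prop
  have hmem : (0 : ℝ) ∈ Set.Ioo ((fun y : ℝ => a * y ^ 3 + b * y ^ 2 + c * y + d) (-R))
      ((fun y : ℝ => a * y ^ 3 + b * y ^ 2 + c * y + d) (-1)) := by
    refine ⟨hneg, ?_⟩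
    show 0 < a * (-1) ^ 3 + b * (-1) ^ 2 + c * (-1) + d
    linarith
  obtain ⟨y, hy, hy0⟩ := intermediate_value_Ioo (by linarith) hcont hmem
  exact ⟨y, hy.2, hy0⟩

/-- Proposition 2, expressed on the finite-difference equation satisfied by
the Fourier coefficients of the interface displacement produced by the
LC-DN-α scheme: in the large added-mass regime
`m > β(2−α)Δt²/(4α) + (2(1−α)/α + 1)s`, with `0 < α ≤ 1`, there exists an
unbounded solution of the recurrence, i.e. the scheme is unstable. -/
theorem lcdn_alpha_unbounded_solution (s m β Δt α : ℝ)
    (hs : 0 < s) (hm : 0 < m) (hβ : 0 < β) (hΔt : 0 < Δt)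
    (hα₀ : 0 < α) (hα₁ : α ≤ 1)
    (hmass : m > β * (2 - α) * Δt ^ 2 / (4 * α) + (2 * (1 - α) / α + 1) * s) :
    ∃ η : ℕ → ℝ,
      (∀ n : ℕ,
        (s + β * Δt ^ 2) * η (n + 3)
          + (α * m - (1 - α) * β * Δt ^ 2 - (3 - α) * s) * η (n + 2)
          + ((3 - 2 * α) * s - 2 * α * m) * η (n + 1)
          + (α * m - (1 - α) * s) * η n = 0) ∧
      (∀ M : ℝ, 0 < M → ∃ n : ℕ, M < |η n|) := by
  have ha : 0 < s + β * Δt ^ 2 := by positivity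
  have hmass2 : β * (2 - α) * Δt ^ 2 + (8 - 4 * α) * s < 4 * α * m := by
    have h4 : 0 < 4 * α := by positivity
    have key := mul_lt_mul_of_pos_left hmass h4
    have e : 4 * α * (β * (2 - α) * Δt ^ 2 / (4 * α) + (2 * (1 - α) / α + 1) * s)
        = β * (2 - α) * Δt ^ 2 + (8 - 4 * α) * s := by
      field_simp
      ring
    linarith
  obtain ⟨y, hy, hy0⟩ := cubic_root_lt_neg_one (s + β * Δt ^ 2)
    (α * m - (1 - α) * β * Δt ^ 2 - (3 - α) * s) ((3 - 2 * α) * s - 2 * α * m)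
    (α * m - (1 - α) * s) ha (by linarith)
  refine ⟨fun n => y ^ n, fun n => ?_, fun M _ => ?_⟩
  · have := congrArg (fun z => y ^ n * z) hy0
    simp only [mul_zero] at this
    rw [← this]
    ring
  · have hy1 : 1 < |y| := by
      rw [abs_of_neg (by linarith)]
      linarith
    obtain ⟨n, hn⟩ := pow_unbounded_of_one_lt M hy1
    exact ⟨n, by simpa [abs_pow] using hn⟩
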